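/- arXiv:1603.06043 — 7 statements merged into one kernel-verified Lean document; each statement's English description precedes it below -/
import Mathlib

section
/- Let d ∈ ℕ with d ≥ 1 and set P = {kd : k ∈ ℕ₀}. Suppose s : P → ℝ is a partial positive definite sequence with pattern P, i.e., for every nonempty finite subset R ⊆ ℕ₀ such that r + r' ∈ P for all r, r' ∈ R, the matrix (s_{r+r'})_{r,r'∈R} is positive definite. Then s has a positive definite completion: there exists a real sequence (ŝ_k)_{k∈ℕ₀} with ŝ_p = s_p for all p ∈ P such that the Hankel matrix Ĥ_n = (ŝ_{i+j})_{i,j=0}^n is positive definite for every n ∈ ℕ₀. -/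
open MeasureTheory

namespace HankelAux

open Polynomial

lemma sq_factor (p : ℝ[X]) (a : ℝ) (h0 : p.eval a = 0) (h1 : (derivative p).eval a = 0) :
    ∃ q : ℝ[X], p = (X - C a) ^ 2 * q := by
  by_cases hp : p = 0
  · exact ⟨0, by simp [hp]⟩
  · have := (one_lt_rootMultiplicity_iff_isRoot hp (t := a)).2 ⟨h0, h1⟩
    exact (le_rootMultiplicity_iff hp).1 this

lemma nonneg_of_ne (q : ℝ[X]) (S : Set ℝ) (a : ℝ) (ha : a ∈ closure (S \ {a}))
    (h : ∀ x ∈ S, x ≠ a → 0 ≤ q.eval x) : ∀ x ∈ S, 0 ≤ q.eval x := by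
  intro x hx
  by_cases hxa : x = a
  · subst hxa
    have hcl : IsClosed {y : ℝ | 0 ≤ q.eval y} := isClosed_le continuous_const q.continuous
    exact closure_minimal (fun y hy => h y hy.1 hy.2) hcl ha
  · exact h x hx hxa

lemma mem_closure_right (a : ℝ) : a ∈ closure (Set.Ioi a) := by
  rw [closure_Ioi]; exact Set.self_mem_Ici

lemma natDegree_lt_of (p q g : ℝ[X]) (m : ℝ) (n : ℕ) (hn : p.natDegree ≤ n + 1) (hg : 1 ≤ g.natDegree)
    (h : p - C m = g * q) : q.natDegree ≤ n := by
  by_cases hq : q = 0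
  · simp [hq]
  have hg0 : g ≠ 0 := by rintro rfl; simp at hg
  have h1 := natDegree_sub_C (p := p) (a := m)
  rw [h, natDegree_mul hg0 hq] at h1
  omega

lemma nonneg_real (n : ℕ) : ∀ p : ℝ[X], p.natDegree ≤ n → (∀ x, 0 ≤ p.eval x) →
    ∀ L : ℝ[X] →ₗ[ℝ] ℝ, (∀ q, 0 ≤ L (q ^ 2)) → 0 ≤ L p := by
  induction n with
  | zero =>
    intro p hp h L hL
    obtain ⟨c, rfl⟩ : ∃ c, p = C c := ⟨_, eq_C_of_natDegree_le_zero hp⟩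
    have hc : 0 ≤ c := by simpa using h 0
    have := hL (C (√c))
    rwa [← C_pow, Real.sq_sqrt hc] at this
  | succ n ih =>
    intro p hp h L hL
    obtain ⟨a, ha⟩ := p.exists_forall_norm_le
    simp only [Real.norm_eq_abs, abs_of_nonneg (h _)] at ha
    have hd : (derivative p).eval a = 0 :=
      IsLocalMin.hasDerivAt_eq_zero (Filter.Eventually.of_forall ha) (p.hasDerivAt a)
    obtain ⟨q, hq⟩ := sq_factor (p - C (p.eval a)) a (by simp) (by simpa using hd)
    have hqd : q.natDegree ≤ n := natDegree_lt_of p q _ _ n hp (by simp) hq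
    have hq0 : ∀ x, 0 ≤ q.eval x := by
      intro x
      refine nonneg_of_ne q Set.univ a
        (closure_mono (by intro y hy; simpa using (ne_of_gt hy)) (mem_closure_right a)) ?_ x trivial
      intro x _ hx
      have h1 := congrArg (eval x) hq
      simp at h1
      have h2 := ha x
      have h3 : 0 < (x - a) ^ 2 := by have := sub_ne_zero.2 hx; positivity
      by_contra! h4
      nlinarith [mul_neg_of_pos_of_neg h3 h4]
    have e : p = C (√(p.eval a)) ^ 2 + (X - C a) ^ 2 * q := by
      rw [← hq, ← C_pow, Real.sq_sqrt (h a)]; ring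
    rw [e, map_add]
    have key := ih q hqd hq0 (L ∘ₗ LinearMap.mulLeft ℝ ((X - C a) ^ 2)) (by
      intro r
      rw [LinearMap.comp_apply, LinearMap.mulLeft_apply, ← mul_pow]
      exact hL ((X - C a) * r))
    rw [LinearMap.comp_apply, LinearMap.mulLeft_apply] at key
    exact add_nonneg (hL _) key

lemma nonneg_half (n : ℕ) : ∀ p : ℝ[X], p.natDegree ≤ n → (∀ x, 0 ≤ x → 0 ≤ p.eval x) →
    ∀ L : ℝ[X] →ₗ[ℝ] ℝ, (∀ q, 0 ≤ L (q ^ 2)) → (∀ q, 0 ≤ L (X * q ^ 2)) → 0 ≤ L p := by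
  induction n with
  | zero =>
    intro p hp h L hL _
    obtain ⟨c, rfl⟩ : ∃ c, p = C c := ⟨_, eq_C_of_natDegree_le_zero hp⟩
    have hc : 0 ≤ c := by simpa using h 0
    have := hL (C (√c))
    rwa [← C_pow, Real.sq_sqrt hc] at this
  | succ n ih =>
    intro p hp h L hL hL'
    obtain ⟨b, hb⟩ := (expand ℝ 2 p).exists_forall_norm_le
    simp only [expand_eval, Real.norm_eq_abs, abs_of_nonneg (h _ (sq_nonneg _))] at hb
    obtain ⟨a, ha0, ha⟩ : ∃ a, 0 ≤ a ∧ ∀ x, 0 ≤ x → p.eval a ≤ p.eval x :=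
      ⟨b ^ 2, sq_nonneg _, fun x hx => by simpa [Real.sq_sqrt hx] using hb (√x)⟩
    have hcl : a ∈ closure (Set.Ici 0 \ {a}) :=
        (closure_mono (by
          intro y hy
          have hy' : a < y := hy
          exact ⟨ha0.trans hy'.le, ne_of_gt hy'⟩) (mem_closure_right a))
    rcases ha0.eq_or_lt with h0 | h0
    · subst h0
      obtain ⟨q, hq⟩ : X ∣ p - C (p.eval 0) := by
        rw [X_dvd_iff]; simp [coeff_zero_eq_eval_zero]
      have hqd : q.natDegree ≤ n := natDegree_lt_of p q _ _ n hp (by simp) hq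
      have hq0 : ∀ x, 0 ≤ x → 0 ≤ q.eval x := by
        refine nonneg_of_ne q (Set.Ici 0) 0 hcl ?_
        intro x hx0 hx
        have h1 := congrArg (eval x) hq
        simp at h1
        have h2 := ha x hx0
        have h3 : 0 < x := lt_of_le_of_ne hx0 (Ne.symm hx)
        by_contra! h4
        nlinarith [mul_neg_of_pos_of_neg h3 h4]
      have e : p = C (√(p.eval 0)) ^ 2 + X * q := by
        rw [← hq, ← C_pow, Real.sq_sqrt (h 0 le_rfl)]; ring
      rw [e, map_add]
      have key := ih q hqd hq0 (L ∘ₗ LinearMap.mulLeft ℝ X) (by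
        intro r
        rw [LinearMap.comp_apply, LinearMap.mulLeft_apply]
        exact hL' r) (by
        intro r
        rw [LinearMap.comp_apply, LinearMap.mulLeft_apply, ← mul_assoc, ← sq X, ← mul_pow]
        exact hL (X * r))
      rw [LinearMap.comp_apply, LinearMap.mulLeft_apply] at key
      exact add_nonneg (hL _) key
    · have hd : (derivative p).eval a = 0 := by
        refine IsLocalMin.hasDerivAt_eq_zero ?_ (p.hasDerivAt a)
        filter_upwards [lt_mem_nhds h0] with x hx using ha x hx.le
      obtain ⟨q, hq⟩ := sq_factor (p - C (p.eval a)) a (by simp) (by simpa using hd)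
      have hqd : q.natDegree ≤ n := natDegree_lt_of p q _ _ n hp (by simp) hq
      have hq0 : ∀ x, 0 ≤ x → 0 ≤ q.eval x := by
        refine nonneg_of_ne q (Set.Ici 0) a hcl ?_
        intro x hx0 hx
        have h1 := congrArg (eval x) hq
        simp at h1
        have h2 := ha x hx0
        have h3 : 0 < (x - a) ^ 2 := by have := sub_ne_zero.2 hx; positivity
        by_contra! h4
        nlinarith [mul_neg_of_pos_of_neg h3 h4]
      have e : p = C (√(p.eval a)) ^ 2 + (X - C a) ^ 2 * q := by
        rw [← hq, ← C_pow, Real.sq_sqrt (h a ha0)]; ring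
      rw [e, map_add]
      have key := ih q hqd hq0 (L ∘ₗ LinearMap.mulLeft ℝ ((X - C a) ^ 2)) (by
        intro r
        rw [LinearMap.comp_apply, LinearMap.mulLeft_apply, ← mul_pow]
        exact hL ((X - C a) * r)) (by
        intro r
        rw [LinearMap.comp_apply, LinearMap.mulLeft_apply, mul_left_comm, ← mul_pow]
        exact hL' ((X - C a) * r))
      rw [LinearMap.comp_apply, LinearMap.mulLeft_apply] at key
      exact add_nonneg (hL _) key

lemma quad_eq (n : ℕ) (L : ℝ[X] →ₗ[ℝ] ℝ) (y : Fin (n + 1) → ℝ) :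
    L ((∑ i, C (y i) * X ^ (i : ℕ)) ^ 2) =
      star y ⬝ᵥ ((Matrix.of fun (i j : Fin (n + 1)) => L (X ^ ((i : ℕ) + (j : ℕ)))).mulVec y) := by
  rw [sq, Finset.sum_mul_sum]
  simp only [map_sum, dotProduct, Matrix.mulVec, Matrix.of_apply,
    Finset.mul_sum, Pi.star_apply, star_trivial]
  refine Finset.sum_congr rfl fun i _ => Finset.sum_congr rfl fun j _ => ?_
  have : (C (y i) * X ^ (i : ℕ) * (C (y j) * X ^ (j : ℕ)) : ℝ[X])
      = (y i * y j) • X ^ ((i : ℕ) + (j : ℕ)) := by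
    rw [smul_eq_C_mul, C_mul]; ring
  rw [this, map_smul, smul_eq_mul]; ring

lemma pos_of_posDef (L : ℝ[X] →ₗ[ℝ] ℝ)
    (h : ∀ n, Matrix.PosDef (Matrix.of fun (i j : Fin (n + 1)) => L (X ^ ((i : ℕ) + (j : ℕ)))))
    (q : ℝ[X]) (hq : q ≠ 0) : 0 < L (q ^ 2) := by
  have e : q = ∑ i : Fin (q.natDegree + 1), C (q.coeff i) * X ^ (i : ℕ) := by
    conv_lhs => rw [q.as_sum_range_C_mul_X_pow]
    rw [Fin.sum_univ_eq_sum_range (fun i => C (q.coeff i) * X ^ i)]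
  have h2 := quad_eq q.natDegree L (fun i => q.coeff i)
  rw [← e] at h2
  rw [h2]
  refine (h _).dotProduct_mulVec_pos ?_
  intro h0
  have := congrFun h0 (Fin.last _)
  simp at this
  exact hq this

lemma posDef_of_pos (L : ℝ[X] →ₗ[ℝ] ℝ) (h : ∀ q, q ≠ 0 → 0 < L (q ^ 2)) (n : ℕ) :
    Matrix.PosDef (Matrix.of fun (i j : Fin (n + 1)) => L (X ^ ((i : ℕ) + (j : ℕ)))) := by
  refine Matrix.PosDef.of_dotProduct_mulVec_pos ?_ ?_
  · ext i j
    simp [add_comm]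
  · intro y hy
    rw [← quad_eq]
    apply h
    intro h0
    apply hy
    ext i
    have := congrArg (fun p => coeff p (i : ℕ)) h0
    simpa [finsetSum_coeff, coeff_X_pow, Fin.val_inj] using this

lemma exists_expand_multiple (d : ℕ) (p : ℝ[X]) (hp : p ≠ 0) :
    ∃ N : ℝ[X], N ≠ 0 ∧ p ∣ expand ℝ d N := by
  have : FiniteDimensional ℝ (AdjoinRoot p) := (AdjoinRoot.powerBasis hp).finite
  obtain ⟨N, hN, h0⟩ := (Algebra.IsIntegral.isIntegral (R := ℝ) (AdjoinRoot.root p ^ d))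
  refine ⟨N, hN.ne_zero, ?_⟩
  rw [← AdjoinRoot.mk_eq_zero, ← AdjoinRoot.aeval_eq, expand_aeval]
  exact h0

lemma strict (d : ℕ) (g L : ℝ[X] →ₗ[ℝ] ℝ) (hg : ∀ q, 0 ≤ g (q ^ 2))
    (hgL : ∀ p, g (expand ℝ d p) = L p) (hL : ∀ q, q ≠ 0 → 0 < L (q ^ 2))
    (p : ℝ[X]) (hp : p ≠ 0) : 0 < g (p ^ 2) := by
  refine lt_of_le_of_ne (hg p) fun h0 => ?_
  obtain ⟨N, hN, r, hr⟩ := exists_expand_multiple d p hp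
  have key : ∀ h, g (p * h) = 0 := by
    intro h
    have e : ∀ t : ℝ, 0 ≤ g (h ^ 2) + 2 * t * g (p * h) := by
      intro t
      have := hg (h + t • p)
      have e2 : (h + t • p) ^ 2 = h ^ 2 + (2 * t) • (p * h) + (t ^ 2) • p ^ 2 := by
        simp only [smul_eq_C_mul, map_mul, map_pow]
        have : (C 2 : ℝ[X]) = 2 := rfl
        rw [this]; ring
      rw [e2] at this
      simpa [← h0] using this
    by_contra hne
    have := e (-(g (h ^ 2) + 1) / (2 * g (p * h)))
    have e3 : 2 * (-(g (h ^ 2) + 1) / (2 * g (p * h))) * g (p * h) = -(g (h ^ 2) + 1) := by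
      field_simp
    linarith
  have h1 := hL N hN
  rw [← hgL, map_pow, hr] at h1
  have h2 := key (r * (p * r))
  rw [show p * (r * (p * r)) = (p * r) ^ 2 by ring] at h2
  linarith

lemma dominate (d : ℕ) (hd : 1 ≤ d) (y : ℝ[X]) :
    ∃ z : ℝ[X], ∀ x : ℝ, 0 ≤ (expand ℝ d z + y).eval x := by
  induction y using Polynomial.induction_on' with
  | add p q hp hq =>
    obtain ⟨z, hz⟩ := hp
    obtain ⟨w, hw⟩ := hq
    refine ⟨z + w, fun x => ?_⟩
    have := add_nonneg (hz x) (hw x)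
    simp only [eval_add, map_add] at this ⊢
    linarith
  | monomial k c =>
    refine ⟨C |c| * (1 + X ^ (2 * k)), fun x => ?_⟩
    simp only [eval_add, expand_eval, eval_mul, eval_C, eval_one, eval_pow, eval_X, eval_monomial]
    have h1 : |x| ^ k ≤ 1 + (x ^ d) ^ (2 * k) := by
      have e : (x ^ d) ^ (2 * k) = |x| ^ (2 * (d * k)) := by
        rw [pow_mul |x|, sq_abs, ← pow_mul, ← pow_mul]; ring_nf
      rw [e]
      have h2 : 0 ≤ |x| ^ (2 * (d * k)) := by positivity
      rcases le_total |x| 1 with h | h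
      · have := pow_le_one₀ (n := k) (abs_nonneg x) h
        linarith
      · have : |x| ^ k ≤ |x| ^ (2 * (d * k)) := pow_le_pow_right₀ h (by nlinarith)
        linarith
    have h3 : -(c * x ^ k) ≤ |c| * |x| ^ k := by
      rw [← abs_pow, ← abs_mul]; exact neg_le_abs _
    nlinarith [mul_le_mul_of_nonneg_left h1 (abs_nonneg c)]

/-- The cone of polynomials nonnegative on the real line. -/
def nonnegCone : PointedCone ℝ ℝ[X] where
  carrier := {p | ∀ x, 0 ≤ p.eval x}
  add_mem' := by
    intro a b ha hb x
    rw [eval_add]; exact add_nonneg (ha x) (hb x)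
  zero_mem' := by intro x; simp
  smul_mem' := by
    intro c a ha x
    have : (c • a).eval x = (c : ℝ) * a.eval x := by
      rw [← smul_eq_mul, ← eval_smul]; rfl
    rw [this]
    exact mul_nonneg c.2 (ha x)

lemma extend (d : ℕ) (hd : 1 ≤ d) (L : ℝ[X] →ₗ[ℝ] ℝ)
    (hL : ∀ p, (∀ x, 0 ≤ (expand ℝ d p).eval x) → 0 ≤ L p) :
    ∃ g : ℝ[X] →ₗ[ℝ] ℝ, (∀ p, g (expand ℝ d p) = L p) ∧ ∀ q, 0 ≤ g (q ^ 2) := by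
  have hinj : Function.Injective (expand ℝ d).toLinearMap := expand_injective hd
  let E := LinearEquiv.ofInjective (expand ℝ d).toLinearMap hinj
  let f : ℝ[X] →ₗ.[ℝ] ℝ := ⟨LinearMap.range (expand ℝ d).toLinearMap, L ∘ₗ E.symm.toLinearMap⟩
  have hf : ∀ p, f (E p) = L p := by
    intro p
    change L (E.symm (E p)) = L p
    simp
  obtain ⟨g, hg1, hg2⟩ := riesz_extension nonnegCone f (by
    intro x hx
    obtain ⟨p, rfl⟩ := E.surjective x
    rw [hf]
    exact hL p hx) (by
    intro y
    obtain ⟨z, hz⟩ := dominate d hd y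
    exact ⟨E z, hz⟩)
  refine ⟨g, fun p => ?_, fun q => hg2 _ ?_⟩
  · rw [← hf p, ← hg1]; rfl
  · intro x
    rw [eval_pow]; positivity

end HankelAux

/-- If the pattern `P = dℕ₀` for some `d ≥ 1`, then every partial positive
definite sequence with pattern `P` has a positive definite completion. -/
theorem pattern_multiples_posDef_completable
    (d : ℕ) (hd : 1 ≤ d) (s : ℕ → ℝ)
    (hpart : ∀ R : Finset ℕ, R.Nonempty →
      (∀ r ∈ R, ∀ r' ∈ R, ∃ k : ℕ, r + r' = k * d) →
      Matrix.PosDef (Matrix.of fun (r r' : R) => s (r.1 + r'.1))) :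
    ∃ sc : ℕ → ℝ,
      (∀ k : ℕ, sc (k * d) = s (k * d)) ∧
      (∀ n : ℕ,
        Matrix.PosDef (Matrix.of fun (i j : Fin (n + 1)) => sc ((i : ℕ) + (j : ℕ)))) := by
  open Polynomial HankelAux in
  let L : ℝ[X] →ₗ[ℝ] ℝ := Polynomial.lsum fun k => s (k * d) • LinearMap.id
  have hLX : ∀ k, L (X ^ k) = s (k * d) := by
    intro k
    rw [← monomial_one_right_eq_X_pow]
    simp [L, Polynomial.lsum_apply]
  have hsub : ∀ e c : ℕ, 2 * e = c * d → ∀ n, Matrix.PosDef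
      (Matrix.of fun (i j : Fin (n + 1)) => s (((i : ℕ) + (j : ℕ) + c) * d)) := by
    intro e c hec n
    let R : Finset ℕ := Finset.univ.image fun i : Fin (n + 1) => (i : ℕ) * d + e
    have hR : ∀ i : Fin (n + 1), (i : ℕ) * d + e ∈ R := fun i =>
      Finset.mem_image_of_mem _ (Finset.mem_univ i)
    have h1 := hpart R ⟨_, hR 0⟩ (by
      intro r hr r' hr'
      obtain ⟨i, -, rfl⟩ := Finset.mem_image.1 hr
      obtain ⟨j, -, rfl⟩ := Finset.mem_image.1 hr'
      exact ⟨i + j + c, by linear_combination hec⟩)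
    have h2 := h1.submatrix (e := fun i : Fin (n + 1) => (⟨(i : ℕ) * d + e, hR i⟩ : R)) (by
      intro i j hij
      have h3 : (i : ℕ) * d + e = j * d + e := congrArg Subtype.val hij
      exact Fin.ext (Nat.eq_of_mul_eq_mul_right hd (by omega)))
    convert h2 using 1
    ext i j
    simp only [Matrix.of_apply, Matrix.submatrix_apply]
    congr 1
    linear_combination -hec
  have hL1 : ∀ q, q ≠ 0 → 0 < L (q ^ 2) := by
    apply pos_of_posDef
    intro n
    simpa [hLX] using hsub 0 0 (by simp) n
  have hL1' : ∀ q, 0 ≤ L (q ^ 2) := by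
    intro q
    by_cases hq : q = 0
    · simp [hq]
    · exact (hL1 q hq).le
  have hLn : ∀ p, (∀ x, 0 ≤ (expand ℝ d p).eval x) → 0 ≤ L p := by
    intro p hp
    simp only [expand_eval] at hp
    rcases Nat.even_or_odd d with he | ho
    · obtain ⟨e, he⟩ := he
      refine nonneg_half _ p le_rfl ?_ L hL1' ?_
      · intro x hx
        have := hp (x ^ ((d : ℝ)⁻¹))
        rwa [Real.rpow_inv_natCast_pow hx (by omega)] at this
      · intro q
        by_cases hq : q = 0
        · simp [hq]
        have := pos_of_posDef (L ∘ₗ LinearMap.mulLeft ℝ X) (by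
          intro n
          have h := hsub e 1 (by omega) n
          simpa [← pow_succ', hLX] using h) q hq
        simpa using this.le
    · refine nonneg_real _ p le_rfl ?_ L hL1'
      intro x
      rcases le_total 0 x with hx | hx
      · have := hp (x ^ ((d : ℝ)⁻¹))
        rwa [Real.rpow_inv_natCast_pow hx (by omega)] at this
      · have := hp (-(-x) ^ ((d : ℝ)⁻¹))
        rwa [ho.neg_pow, Real.rpow_inv_natCast_pow (by linarith) (by omega), neg_neg] at this
  obtain ⟨g, hg1, hg2⟩ := extend d hd L hLn
  refine ⟨fun k => g (X ^ k), fun k => ?_, fun n => ?_⟩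
  · rw [← hLX, ← hg1]
    simp [← pow_mul, mul_comm]
  · exact posDef_of_pos g (strict d g L hg2 hg1 hL1) n
end

section
/- Let (ℓ_k)_{k∈ℕ₀} be a sequence of natural numbers such that for every a ∈ ℝ the sequence (a^{ℓ_k})_{k∈ℕ₀} is a positive sequence, i.e., every Hankel matrix (a^{ℓ_{.}}) built from it, H_n = (a^{ℓ_{i+j}})_{i,j=0}^n, is positive semidefinite. Then there exists d ∈ ℕ₀ such that ℓ_k = kd + ℓ_0 for all k ∈ ℕ₀, and ℓ_0 is even. -/
open MeasureTheory

theorem hankel_minor (ℓ : ℕ → ℕ)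
    (hpos : ∀ a : ℝ, ∀ n : ℕ,
      Matrix.PosSemidef
        (Matrix.of fun (i j : Fin (n + 1)) => a ^ ℓ ((i : ℕ) + (j : ℕ))))
    (a : ℝ) (i j : ℕ) : a ^ (2 * ℓ (i + j)) ≤ a ^ (ℓ (i + i) + ℓ (j + j)) := by
  have h := ((hpos a (i + j)).submatrix
    ![(⟨i, by omega⟩ : Fin (i + j + 1)), ⟨j, by omega⟩]).det_nonneg
  rw [Matrix.det_fin_two] at h
  simp only [Matrix.submatrix_apply, Matrix.of_apply, Matrix.cons_val_zero,
    Matrix.cons_val_one] at h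
  rw [Nat.add_comm j i, ← pow_add, ← pow_add, ← two_mul (ℓ (i + j))] at h
  linarith

theorem exponent_midpoint (ℓ : ℕ → ℕ)
    (hpos : ∀ a : ℝ, ∀ n : ℕ,
      Matrix.PosSemidef
        (Matrix.of fun (i j : Fin (n + 1)) => a ^ ℓ ((i : ℕ) + (j : ℕ))))
    (i j : ℕ) : 2 * ℓ (i + j) = ℓ (i + i) + ℓ (j + j) := by
  apply le_antisymm
  · exact (pow_le_pow_iff_right₀ (by norm_num : (1 : ℝ) < 2)).1 (hankel_minor ℓ hpos 2 i j)
  · exact (pow_le_pow_iff_right_of_lt_one₀ (by norm_num : (0 : ℝ) < 1 / 2)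
      (by norm_num)).1 (hankel_minor ℓ hpos (1 / 2) i j)

/-- If `(ℓ k)` is a sequence of natural numbers such that `(a^{ℓ k})` is a
positive sequence (all Hankel matrices positive semidefinite) for every real `a`, then
`ℓ k = k d + ℓ 0` for some `d ∈ ℕ₀`, and `ℓ 0` is even. -/
theorem exponents_of_positive_geometric_sequences_are_arithmetic
    (ℓ : ℕ → ℕ)
    (hpos : ∀ a : ℝ, ∀ n : ℕ,
      Matrix.PosSemidef
        (Matrix.of fun (i j : Fin (n + 1)) => a ^ ℓ ((i : ℕ) + (j : ℕ)))) :
    (∃ d : ℕ, ∀ k : ℕ, ℓ k = k * d + ℓ 0) ∧ Even (ℓ 0) := by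
  have hm := exponent_midpoint ℓ hpos
  have hadd : ∀ i j, ℓ (i + j) + ℓ 0 = ℓ i + ℓ j := by
    intro i j
    have h1 := hm i j
    have h2 := hm i 0
    have h3 := hm j 0
    simp only [Nat.add_zero] at h2 h3
    omega
  have hlin : ∀ k : ℕ, (ℓ k : ℤ) = k * ((ℓ 1 : ℤ) - ℓ 0) + ℓ 0 := by
    intro k
    induction k with
    | zero => simp
    | succ k ih =>
      have h : (ℓ (k + 1) : ℤ) + ℓ 0 = ℓ k + ℓ 1 := by exact_mod_cast hadd k 1
      push_cast
      linarith
  have hle : ℓ 0 ≤ ℓ 1 := by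
    by_contra hc
    have h := hlin (ℓ 0 + 1)
    have hc' : (ℓ 1 : ℤ) - ℓ 0 ≤ -1 := by omega
    push_cast at h
    have h0 : (0 : ℤ) ≤ ℓ (ℓ 0 + 1) := by positivity
    have h1 : (0 : ℤ) ≤ ℓ 0 := by positivity
    nlinarith
  refine ⟨⟨ℓ 1 - ℓ 0, fun k => ?_⟩, ?_⟩
  · have h := hlin k
    zify [hle]
    exact h
  · have h := (hpos (-1) 0).diag_nonneg (i := 0)
    simp only [Matrix.of_apply, Fin.val_zero, Nat.add_zero] at h
    by_contra ho
    rw [(Nat.not_even_iff_odd.1 ho).neg_one_pow] at h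
    linarith
end

section
/- Let (s_k)_{k∈ℕ₀} be a positive sequence and let (ℓ_k)_{k∈ℕ₀} be a sequence of natural numbers such that for every a ∈ ℝ the sequence (a^{ℓ_k})_{k∈ℕ₀} is a positive sequence. Then the subsequence (s̃_k)_{k∈ℕ₀} defined by s̃_k = s_{k+ℓ_k} is a positive sequence. -/
open MeasureTheory

open Polynomial in
theorem isSumSq_of_nonneg_aux (n : ℕ) : ∀ p : ℝ[X], p.natDegree ≤ n → (∀ x, 0 ≤ p.eval x) →
    IsSumSq p := by
  induction n using Nat.strong_induction_on with
  | _ n ih =>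
  intro p hn hp
  by_cases hd : p.natDegree = 0
  · obtain ⟨c, rfl⟩ := natDegree_eq_zero.mp hd
    have hc : 0 ≤ c := by simpa using hp 0
    have : (C c : ℝ[X]) = C (Real.sqrt c) * C (Real.sqrt c) := by
      rw [← C_mul, Real.mul_self_sqrt hc]
    rw [this]
    exact IsSumSq.mul_self _
  have hp0 : p ≠ 0 := by rintro rfl; simp at hd
  obtain ⟨z, hz⟩ := IsAlgClosed.exists_aeval_eq_zero ℂ p
    (by rw [degree_eq_natDegree hp0]; exact_mod_cast hd)
  by_cases him : z.im = 0
  · obtain ⟨a, rfl⟩ : ∃ a : ℝ, (a : ℂ) = z := ⟨z.re, by apply Complex.ext <;> simp [him]⟩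
    have hroot : p.eval a = 0 := by
      have h1 := aeval_algebraMap_apply ℂ a p
      have h2 : ((aeval a p : ℝ) : ℂ) = 0 := by rw [← hz]; exact h1.symm
      rw [← coe_aeval_eq_eval]
      exact_mod_cast h2
    obtain ⟨q, rfl⟩ := dvd_iff_isRoot.mpr hroot
    have hmin : IsLocalMin (fun x => ((X - C a) * q).eval x) a := by
      apply Filter.Eventually.of_forall
      intro x
      exact hroot.trans_le (hp x)
    have hder := hmin.deriv_eq_zero
    rw [Polynomial.deriv] at hder
    have hq : q.eval a = 0 := by simpa using hder
    obtain ⟨r, rfl⟩ := dvd_iff_isRoot.mpr hq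
    have hr0 : r ≠ 0 := by rintro rfl; simp at hp0
    have hr : ∀ x, 0 ≤ r.eval x := by
      have hcl : IsClosed {x | 0 ≤ r.eval x} := isClosed_le continuous_const r.continuous
      have hsub : ({a}ᶜ : Set ℝ) ⊆ {x | 0 ≤ r.eval x} := by
        intro x hx
        have hx' : x - a ≠ 0 := sub_ne_zero.mpr hx
        have := hp x
        simp only [eval_mul, eval_sub, eval_X, eval_C, ← mul_assoc] at this
        exact nonneg_of_mul_nonneg_right this (mul_self_pos.mpr hx')
      intro x
      exact closure_minimal hsub hcl (dense_compl_singleton a x)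
    have hdeg : r.natDegree < n := by
      rw [natDegree_mul (X_sub_C_ne_zero a) (mul_ne_zero (X_sub_C_ne_zero a) hr0),
        natDegree_mul (X_sub_C_ne_zero a) hr0, natDegree_X_sub_C] at hn
      omega
    rw [← mul_assoc]
    exact (IsSumSq.mul_self _).mul (ih _ hdeg r le_rfl hr)
  · obtain ⟨r, hr⟩ := quadratic_dvd_of_aeval_eq_zero_im_ne_zero p hz him
    have hquad : (X ^ 2 - C (2 * z.re) * X + C (‖z‖ ^ 2) : ℝ[X]) =
        (X - C z.re) * (X - C z.re) + C z.im * C z.im := by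
      rw [Complex.sq_norm, Complex.normSq_apply]
      simp only [C_mul, C_add, C_ofNat]
      ring
    have hm : (X ^ 2 - C (2 * z.re) * X + C (‖z‖ ^ 2) : ℝ[X]).natDegree = 2 := by
      compute_degree!
    rw [hr] at hn hp hp0 ⊢
    have hr0 : r ≠ 0 := right_ne_zero_of_mul hp0
    rw [natDegree_mul (left_ne_zero_of_mul hp0) hr0, hm] at hn
    rw [hquad] at hp ⊢
    refine IsSumSq.mul ((IsSumSq.mul_self _).add (IsSumSq.mul_self _))
      (ih r.natDegree (by omega) r le_rfl fun x => ?_)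
    have := hp x
    simp only [eval_mul, eval_add, eval_sub, eval_X, eval_C] at this
    exact nonneg_of_mul_nonneg_right this
      (add_pos_of_nonneg_of_pos (mul_self_nonneg _) (mul_self_pos.mpr him))

/-- If `s` is a positive sequence and `(ℓ k)` is a sequence of naturals such
that `(a^{ℓ k})` is a positive sequence for every real `a`, then the subsequence
`s̃ k = s (k + ℓ k)` is a positive sequence. -/
theorem subsequence_positive_of_geometric_positive
    (s : ℕ → ℝ)
    (hs : ∀ n : ℕ,
      Matrix.PosSemidef (Matrix.of fun (i j : Fin (n + 1)) => s ((i : ℕ) + (j : ℕ))))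
    (ℓ : ℕ → ℕ)
    (hℓ : ∀ a : ℝ, ∀ n : ℕ,
      Matrix.PosSemidef
        (Matrix.of fun (i j : Fin (n + 1)) => a ^ ℓ ((i : ℕ) + (j : ℕ)))) :
    ∀ n : ℕ,
      Matrix.PosSemidef
        (Matrix.of fun (i j : Fin (n + 1)) =>
          s (((i : ℕ) + (j : ℕ)) + ℓ ((i : ℕ) + (j : ℕ)))) := by
  intro n
  let L : Polynomial ℝ →ₗ[ℝ] ℝ := Polynomial.lsum fun k => s k • LinearMap.id
  have hL : ∀ k a, L (Polynomial.monomial k a) = s k * a := by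
    intro k a
    simp [L, Polynomial.lsum_apply, Polynomial.sum_monomial_index]
  have hsq : ∀ q : Polynomial ℝ, 0 ≤ L (q * q) := by
    intro q
    have h := (hs q.natDegree).dotProduct_mulVec_nonneg (fun i => q.coeff i)
    have e : q = ∑ i : Fin (q.natDegree + 1), Polynomial.monomial (i : ℕ) (q.coeff i) := by
      rw [Fin.sum_univ_eq_sum_range (fun i => Polynomial.monomial i (q.coeff i))]
      exact q.as_sum_range
    have e2 : L (q * q) = ∑ i : Fin (q.natDegree + 1), ∑ j : Fin (q.natDegree + 1),
        s (i + j) * (q.coeff i * q.coeff j) := by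
      conv_lhs => rw [e]
      simp only [Finset.sum_mul_sum, map_sum, Polynomial.monomial_mul_monomial, hL]
    rw [e2]
    refine h.trans_eq ?_
    simp only [dotProduct, Matrix.mulVec, Finset.mul_sum, Matrix.of_apply, Pi.star_apply,
      star_trivial]
    refine Finset.sum_congr rfl fun i _ => Finset.sum_congr rfl fun j _ => ?_
    ring
  have hss : ∀ p : Polynomial ℝ, IsSumSq p → 0 ≤ L p := by
    intro p hp
    induction hp with
    | zero => simp
    | sq_add a _ ih => rw [map_add]; exact add_nonneg (hsq a) ih
  refine Matrix.PosSemidef.of_dotProduct_mulVec_nonneg ?_ fun c => ?_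
  · ext i j
    simp [Matrix.conjTranspose_apply, add_comm (j : ℕ) (i : ℕ)]
  have hmain := hss (∑ i : Fin (n + 1), ∑ j : Fin (n + 1),
    Polynomial.monomial ((i : ℕ) + j + ℓ (i + j)) (c i * c j))
    (isSumSq_of_nonneg_aux _ _ le_rfl fun x => by
      have h := (hℓ x n).dotProduct_mulVec_nonneg (fun i => c i * x ^ (i : ℕ))
      refine h.trans_eq ?_
      simp only [dotProduct, Matrix.mulVec, Finset.mul_sum, Matrix.of_apply, Pi.star_apply,
        star_trivial, Polynomial.eval_finsetSum, Polynomial.eval_monomial]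
      refine Finset.sum_congr rfl fun i _ => Finset.sum_congr rfl fun j _ => ?_
      ring)
  refine hmain.trans_eq ?_
  simp only [dotProduct, Matrix.mulVec, Finset.mul_sum, Matrix.of_apply, Pi.star_apply,
    star_trivial, map_sum, hL]
  refine Finset.sum_congr rfl fun i _ => Finset.sum_congr rfl fun j _ => ?_
  ring
end

section
/- Let σ and σ̃ be nonnegative Borel measures on ℝ with all moments finite, let d ∈ ℕ with d ≥ 1 and ℓ₀ an even natural number, and suppose ∫_ℝ x^{kd+ℓ₀} dσ(x) = ∫_ℝ x^k dσ̃(x) for all k ∈ ℕ₀. Assume the Hamburger moment sequence s̃_k = ∫_ℝ x^k dσ̃(x) is determinate. Then for every Borel function f : ℝ → ℝ that is σ̃-integrable, the function x ↦ f(x^d) x^{ℓ₀} is σ-integrable and ∫_ℝ f(x^d) x^{ℓ₀} dσ(x) = ∫_ℝ f(x) dσ̃(x). -/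
open MeasureTheory

/-- Suppose `∫ x^{kd+ℓ₀} dσ = ∫ x^k dσ̃` for all `k`, with `d ≥ 1`, `ℓ₀`
even, and the moment sequence of `σ̃` is determinate. Then for every Borel `σ̃`-integrable
`f : ℝ → ℝ`, the function `x ↦ f(x^d) x^{ℓ₀}` is `σ`-integrable and
`∫ f(x^d) x^{ℓ₀} dσ = ∫ f dσ̃`. -/
theorem integral_substitution_of_determinate
    (σ σt : Measure ℝ)
    (hintσ : ∀ k : ℕ, Integrable (fun x : ℝ => x ^ k) σ)
    (hintσt : ∀ k : ℕ, Integrable (fun x : ℝ => x ^ k) σt)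
    (d ℓ₀ : ℕ) (hd : 1 ≤ d) (hℓ₀ : Even ℓ₀)
    (hmom : ∀ k : ℕ, ∫ x, x ^ (k * d + ℓ₀) ∂σ = ∫ x, x ^ k ∂σt)
    (hdet : ∀ μ : Measure ℝ,
      (∀ k : ℕ, Integrable (fun x : ℝ => x ^ k) μ) →
      (∀ k : ℕ, ∫ x, x ^ k ∂μ = ∫ x, x ^ k ∂σt) → μ = σt) :
    ∀ f : ℝ → ℝ, Measurable f → Integrable f σt →
      Integrable (fun x : ℝ => f (x ^ d) * x ^ ℓ₀) σ ∧
      ∫ x, f (x ^ d) * x ^ ℓ₀ ∂σ = ∫ x, f x ∂σt := by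
  set g : ℝ → NNReal := fun x => Real.toNNReal (x ^ ℓ₀) with hg
  have hgm : Measurable g := by fun_prop
  have hgv : ∀ (x y : ℝ), g x • y = y * x ^ ℓ₀ := by
    intro x y
    rw [NNReal.smul_def, hg, smul_eq_mul, Real.coe_toNNReal _ (hℓ₀.pow_nonneg x), mul_comm]
  have hpm : Measurable (fun x : ℝ => x ^ d) := by fun_prop
  set μ : Measure ℝ := (σ.withDensity (fun x => (g x : ENNReal))).map (fun x : ℝ => x ^ d)
    with hμ
  have key1 : ∀ f : ℝ → ℝ, Measurable f →
      (Integrable f μ ↔ Integrable (fun x : ℝ => f (x ^ d) * x ^ ℓ₀) σ) := by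
    intro f hf
    rw [hμ, integrable_map_measure hf.aestronglyMeasurable hpm.aemeasurable,
      integrable_withDensity_iff_integrable_smul hgm]
    simp only [hgv, Function.comp_apply]
  have key2 : ∀ f : ℝ → ℝ, Measurable f →
      ∫ x, f x ∂μ = ∫ x, f (x ^ d) * x ^ ℓ₀ ∂σ := by
    intro f hf
    rw [hμ, integral_map hpm.aemeasurable hf.aestronglyMeasurable,
      integral_withDensity_eq_integral_smul hgm]
    simp only [hgv]
  have hpow : ∀ (k : ℕ) (x : ℝ), (x ^ d) ^ k * x ^ ℓ₀ = x ^ (k * d + ℓ₀) := by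
    intro k x
    rw [← pow_mul, ← pow_add, mul_comm d k]
  have hμt : μ = σt := by
    apply hdet
    · intro k
      rw [key1 _ (by fun_prop)]
      simp only [hpow]
      exact hintσ _
    · intro k
      rw [key2 _ (by fun_prop)]
      simp only [hpow]
      exact hmom k
  intro f hf hfi
  rw [← hμt] at hfi ⊢
  exact ⟨(key1 f hf).1 hfi, (key2 f hf).symm⟩
end

section
/- Let σ and σ̃ be nonnegative Borel measures on ℝ with all moments finite, let d ∈ ℕ with d ≥ 1 and ℓ₀ an even natural number, and suppose ∫_ℝ x^{kd+ℓ₀} dσ(x) = ∫_ℝ x^k dσ̃(x) for all k ∈ ℕ₀. Assume the Hamburger moment sequence s̃_k = ∫_ℝ x^k dσ̃(x) is determinate. Then for every λ ∈ ℂ with Im λ ≠ 0, ∫_ℝ x^{ℓ₀}/(x^d − λ) dσ(x) = ∫_ℝ 1/(x − λ) dσ̃(x) (both integrals being absolutely convergent complex-valued integrals). -/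
open MeasureTheory

/-- Under the hypotheses of Statement 13, for every `λ ∈ ℂ` with
`Im λ ≠ 0`, `∫ x^{ℓ₀}/(x^d − λ) dσ = ∫ 1/(x − λ) dσ̃`. -/
theorem cauchy_transform_substitution_of_determinate
    (σ σt : Measure ℝ)
    (hintσ : ∀ k : ℕ, Integrable (fun x : ℝ => x ^ k) σ)
    (hintσt : ∀ k : ℕ, Integrable (fun x : ℝ => x ^ k) σt)
    (d ℓ₀ : ℕ) (hd : 1 ≤ d) (hℓ₀ : Even ℓ₀)
    (hmom : ∀ k : ℕ, ∫ x, x ^ (k * d + ℓ₀) ∂σ = ∫ x, x ^ k ∂σt)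
    (hdet : ∀ μ : Measure ℝ,
      (∀ k : ℕ, Integrable (fun x : ℝ => x ^ k) μ) →
      (∀ k : ℕ, ∫ x, x ^ k ∂μ = ∫ x, x ^ k ∂σt) → μ = σt) :
    ∀ lam : ℂ, lam.im ≠ 0 →
      ∫ x : ℝ, (x : ℂ) ^ ℓ₀ / ((x : ℂ) ^ d - lam) ∂σ =
        ∫ x : ℝ, 1 / ((x : ℂ) - lam) ∂σt := by
  have hpos : ∀ x : ℝ, 0 ≤ x ^ ℓ₀ := fun x => hℓ₀.pow_nonneg x
  have hf : Measurable (fun x : ℝ => Real.toNNReal (x ^ ℓ₀)) := by fun_prop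
  have hg : Measurable (fun x : ℝ => x ^ d) := by fun_prop
  have key : (σ.withDensity (fun x => ((Real.toNNReal (x ^ ℓ₀) : NNReal) : ENNReal))).map
      (fun x : ℝ => x ^ d) = σt := by
    apply hdet
    · intro k
      rw [integrable_map_measure (by fun_prop) hg.aemeasurable,
        integrable_withDensity_iff_integrable_smul hf]
      refine (hintσ (k * d + ℓ₀)).congr (Filter.Eventually.of_forall fun x => ?_)
      simp only [Function.comp, NNReal.smul_def, Real.coe_toNNReal _ (hpos x), smul_eq_mul]
      ring
    · intro k
      rw [← hmom k, integral_map hg.aemeasurable (by fun_prop),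
        integral_withDensity_eq_integral_smul hf]
      refine integral_congr_ae (Filter.Eventually.of_forall fun x => ?_)
      simp only [NNReal.smul_def, Real.coe_toNNReal _ (hpos x), smul_eq_mul]
      ring
  intro lam _
  rw [← key, integral_map hg.aemeasurable
      (Measurable.aestronglyMeasurable (by fun_prop)),
    integral_withDensity_eq_integral_smul hf]
  refine integral_congr_ae (Filter.Eventually.of_forall fun x => ?_)
  simp only [NNReal.smul_def, Real.coe_toNNReal _ (hpos x), Complex.real_smul]
  push_cast
  ring
end

section
/- Let σ and σ̃ be nonnegative Borel measures on ℝ with all moments finite, let ℓ₀ be an even natural number, suppose ∫_ℝ x^{k+ℓ₀} dσ(x) = ∫_ℝ x^k dσ̃(x) for all k ∈ ℕ₀, and assume the Hamburger moment sequence s̃_k = ∫_ℝ x^k dσ̃(x) is determinate. Let s_k = ∫_ℝ x^k dσ(x). Then for every λ ∈ ℂ with Im λ ≠ 0, ∫_ℝ 1/(x − λ) dσ̃(x) = C + λ^{ℓ₀} ∫_ℝ 1/(x − λ) dσ(x), where C = Σ_{j=0}^{ℓ₀−1} λ^j s_{ℓ₀−1−j} is a constant depending only on λ and the moments of σ. 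-/
open MeasureTheory

/-- Suppose `∫ x^{k+ℓ₀} dσ = ∫ x^k dσ̃` for all `k`, with `ℓ₀` even and the
moment sequence of `σ̃` determinate. With `s k = ∫ x^k dσ`, for every `λ ∈ ℂ` with `Im λ ≠ 0`,
`∫ 1/(x − λ) dσ̃ = C + λ^{ℓ₀} ∫ 1/(x − λ) dσ` where
`C = Σ_{j=0}^{ℓ₀−1} λ^j s_{ℓ₀−1−j}`. -/
theorem cauchy_transform_shift_relation
    (σ σt : Measure ℝ)
    (hintσ : ∀ k : ℕ, Integrable (fun x : ℝ => x ^ k) σ)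
    (hintσt : ∀ k : ℕ, Integrable (fun x : ℝ => x ^ k) σt)
    (ℓ₀ : ℕ) (hℓ₀ : Even ℓ₀)
    (hmom : ∀ k : ℕ, ∫ x, x ^ (k + ℓ₀) ∂σ = ∫ x, x ^ k ∂σt)
    (hdet : ∀ μ : Measure ℝ,
      (∀ k : ℕ, Integrable (fun x : ℝ => x ^ k) μ) →
      (∀ k : ℕ, ∫ x, x ^ k ∂μ = ∫ x, x ^ k ∂σt) → μ = σt)
    (s : ℕ → ℝ) (hs : ∀ k : ℕ, s k = ∫ x, x ^ k ∂σ) :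
    ∀ lam : ℂ, lam.im ≠ 0 →
      ∫ x : ℝ, 1 / ((x : ℂ) - lam) ∂σt =
        (∑ j ∈ Finset.range ℓ₀, lam ^ j * (s (ℓ₀ - 1 - j) : ℂ)) +
          lam ^ ℓ₀ * ∫ x : ℝ, 1 / ((x : ℂ) - lam) ∂σ := by
  intro lam hlam
  have hfin : IsFiniteMeasure σ := by
    have h := hintσ 0
    simp only [pow_zero] at h
    exact (integrable_const_iff_isFiniteMeasure one_ne_zero).1 h
  have hpos : ∀ x : ℝ, 0 ≤ x ^ ℓ₀ := fun x => hℓ₀.pow_nonneg x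
  have hmeas : Measurable (fun x : ℝ => (x ^ ℓ₀).toNNReal) := by fun_prop
  have hμ : σ.withDensity (fun x => ((x ^ ℓ₀).toNNReal : ENNReal)) = σt := by
    apply hdet
    · intro k
      rw [integrable_withDensity_iff_integrable_smul hmeas]
      refine (hintσ (k + ℓ₀)).congr (Filter.Eventually.of_forall fun x => ?_)
      simp only [NNReal.smul_def, Real.coe_toNNReal _ (hpos x), smul_eq_mul]
      ring
    · intro k
      rw [integral_withDensity_eq_integral_smul hmeas, ← hmom k]
      refine integral_congr_ae (Filter.Eventually.of_forall fun x => ?_)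
      simp only [NNReal.smul_def, Real.coe_toNNReal _ (hpos x), smul_eq_mul]
      ring
  have hne : ∀ x : ℝ, (x : ℂ) - lam ≠ 0 := by
    intro x h
    apply hlam
    have := congrArg Complex.im h
    simpa using this
  have hint : Integrable (fun x : ℝ => 1 / ((x : ℂ) - lam)) σ := by
    refine Integrable.of_bound (C := 1 / |lam.im|) (Measurable.aestronglyMeasurable (by fun_prop))
      (Filter.Eventually.of_forall fun x => ?_)
    rw [norm_div, norm_one]
    have h1 := Complex.abs_im_le_norm ((x : ℂ) - lam)
    simp only [Complex.sub_im, Complex.ofReal_im, zero_sub, abs_neg] at h1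
    exact one_div_le_one_div_of_le (abs_pos.2 hlam) h1
  have hterm : ∀ j ∈ Finset.range ℓ₀,
      Integrable (fun x : ℝ => lam ^ j * ((x ^ (ℓ₀ - 1 - j) : ℝ) : ℂ)) σ :=
    fun j _ => (hintσ (ℓ₀ - 1 - j)).ofReal.const_mul _
  have hpt : ∀ x : ℝ, (x ^ ℓ₀).toNNReal • (1 / ((x : ℂ) - lam)) =
      (∑ j ∈ Finset.range ℓ₀, lam ^ j * ((x ^ (ℓ₀ - 1 - j) : ℝ) : ℂ)) +
        lam ^ ℓ₀ * (1 / ((x : ℂ) - lam)) := by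
    intro x
    have hg := (Commute.all lam (x : ℂ)).geom_sum₂_mul ℓ₀
    rw [NNReal.smul_def, Real.coe_toNNReal _ (hpos x), Complex.real_smul]
    push_cast
    have := hne x
    field_simp
    linear_combination hg
  rw [← hμ, integral_withDensity_eq_integral_smul hmeas]
  simp_rw [hpt]
  rw [integral_add (integrable_finsetSum _ hterm) (hint.const_mul _),
    integral_finsetSum _ hterm, integral_const_mul]
  congr 1
  refine Finset.sum_congr rfl fun j _ => ?_
  rw [integral_const_mul, hs, integral_complex_ofReal]
end

section
/- Every real sequence is a moment sequence of a signed measure: for any sequence (t_k)_{k∈ℕ₀} of real numbers there exists a signed Borel measure μ on ℝ of bounded variation (i.e., with finite total variation) such that all moments of its total variation measure are finite and ∫_ℝ x^k dμ(x) = t_k for all k ∈ ℕ₀. -/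
open MeasureTheory

lemma jordan_aux (P N : Measure ℝ) [IsFiniteMeasure P] [IsFiniteMeasure N] :
    (P.toSignedMeasure - N.toSignedMeasure).toJordanDecomposition.posPart ≤ P ∧
    (P.toSignedMeasure - N.toSignedMeasure).toJordanDecomposition.negPart ≤ N ∧
    (P.toSignedMeasure - N.toSignedMeasure).toJordanDecomposition.posPart + N =
    (P.toSignedMeasure - N.toSignedMeasure).toJordanDecomposition.negPart + P := by
  set s := P.toSignedMeasure - N.toSignedMeasure with hs
  obtain ⟨i, hi₁, hi₂, hi₃, hμ, hν⟩ := s.toJordanDecomposition_spec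
  have key : ∀ A, MeasurableSet A → s A = P.real A - N.real A := fun A hA => by
    rw [hs, Measure.toSignedMeasure_sub_apply hA]
  refine ⟨?_, ?_, ?_⟩
  · refine Measure.le_iff.2 fun A hA => ?_
    rw [← ENNReal.toReal_le_toReal (by finiteness) (by finiteness)]
    change Measure.real _ _ ≤ Measure.real _ _
    rw [hμ, SignedMeasure.toMeasureOfZeroLE_real_apply _ hi₂ hi₁ hA, key _ (hi₁.inter hA)]
    have h1 : P.real (i ∩ A) ≤ P.real A := measureReal_mono Set.inter_subset_right
    have h2 : 0 ≤ N.real (i ∩ A) := measureReal_nonneg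
    linarith
  · refine Measure.le_iff.2 fun A hA => ?_
    rw [← ENNReal.toReal_le_toReal (by finiteness) (by finiteness)]
    change Measure.real _ _ ≤ Measure.real _ _
    rw [hν, SignedMeasure.toMeasureOfLEZero_real_apply _ hi₃ hi₁.compl hA,
      key _ (hi₁.compl.inter hA)]
    have h1 : N.real (iᶜ ∩ A) ≤ N.real A := measureReal_mono Set.inter_subset_right
    have h2 : 0 ≤ P.real (iᶜ ∩ A) := measureReal_nonneg
    linarith
  · ext A hA
    rw [← ENNReal.toReal_eq_toReal_iff' (by finiteness) (by finiteness)]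
    change Measure.real _ _ = Measure.real _ _
    rw [measureReal_add_apply, measureReal_add_apply]
    have h := key A hA
    rw [← s.toSignedMeasure_toJordanDecomposition, JordanDecomposition.toSignedMeasure,
      Measure.toSignedMeasure_sub_apply hA] at h
    linarith

lemma integrable_pow_of_abs {k : ℕ} {P : Measure ℝ} :
    Integrable (fun x : ℝ => |x| ^ k) P ↔ Integrable (fun x : ℝ => x ^ k) P := by
  rw [← integrable_norm_iff (f := fun x : ℝ => x ^ k) (by fun_prop)]
  simp

lemma main_aux (t : ℕ → ℝ) (P N : Measure ℝ)
    (hP : ∀ k : ℕ, Integrable (fun x : ℝ => x ^ k) P)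
    (hN : ∀ k : ℕ, Integrable (fun x : ℝ => x ^ k) N)
    (h : ∀ k : ℕ, ∫ x, x ^ k ∂P - ∫ x, x ^ k ∂N = t k) :
    ∃ μ : SignedMeasure ℝ,
      (∀ k : ℕ, Integrable (fun x : ℝ => |x| ^ k) μ.totalVariation) ∧
      (∀ k : ℕ,
        (∫ x, x ^ k ∂μ.toJordanDecomposition.posPart) -
          (∫ x, x ^ k ∂μ.toJordanDecomposition.negPart) = t k) := by
  have : IsFiniteMeasure P := by
    have := hP 0
    simp only [pow_zero] at this
    exact (integrable_const_iff_isFiniteMeasure one_ne_zero).1 this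
  have : IsFiniteMeasure N := by
    have := hN 0
    simp only [pow_zero] at this
    exact (integrable_const_iff_isFiniteMeasure one_ne_zero).1 this
  obtain ⟨h1, h2, h3⟩ := jordan_aux P N
  refine ⟨P.toSignedMeasure - N.toSignedMeasure, fun k => ?_, fun k => ?_⟩
  · rw [integrable_pow_of_abs, SignedMeasure.totalVariation]
    exact ((hP k).mono_measure h1).add_measure ((hN k).mono_measure h2)
  · have := congrArg (fun m : Measure ℝ => ∫ x, x ^ k ∂m) h3
    rw [integral_add_measure ((hP k).mono_measure h1) (hN k),
      integral_add_measure ((hN k).mono_measure h2) (hP k)] at this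
    rw [← h k]
    linarith

lemma integral_atoms (n : ℕ) (w x : ℕ → ℝ) (f : ℝ → ℝ) :
    Integrable f (∑ j ∈ Finset.range n, ENNReal.ofReal (w j) • Measure.dirac (x j)) ∧
    ∫ y, f y ∂(∑ j ∈ Finset.range n, ENNReal.ofReal (w j) • Measure.dirac (x j)) =
      ∑ j ∈ Finset.range n, max (w j) 0 * f (x j) := by
  have hi : ∀ j ∈ Finset.range n,
      Integrable f (ENNReal.ofReal (w j) • Measure.dirac (x j)) := fun j _ =>
    (integrable_dirac (by simp)).smul_measure (by simp)
  refine ⟨integrable_finsetSum_measure.2 hi, ?_⟩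
  rw [integral_finsetSum_measure hi]
  refine Finset.sum_congr rfl fun j _ => ?_
  rw [integral_smul_measure, integral_dirac, ENNReal.toReal_ofReal', smul_eq_mul]

lemma diff_sum (n k : ℕ) (hk : k ≤ n) :
    ∑ j ∈ Finset.range (n + 1), ((-1 : ℝ) ^ (n - j) * n.choose j) * (j : ℝ) ^ k =
      if k = n then (n.factorial : ℝ) else 0 := by
  have h := fwdDiff_iter_eq_sum_shift (1 : ℝ) (fun r : ℝ => r ^ k) n 0
  split_ifs with hkn
  · subst hkn
    rw [fwdDiff_iter_eq_factorial] at h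
    simpa using h.symm
  · rw [fwdDiff_iter_pow_eq_zero_of_lt (lt_of_le_of_ne hk hkn)] at h
    simpa using h.symm

lemma step (n : ℕ) (s ε : ℝ) (hε : 0 < ε) : ∃ P N : Measure ℝ,
    (∀ k : ℕ, Integrable (fun x : ℝ => x ^ k) P) ∧
    (∀ k : ℕ, Integrable (fun x : ℝ => x ^ k) N) ∧
    (∀ k < n, ∫ x, x ^ k ∂P - ∫ x, x ^ k ∂N = 0) ∧
    (∫ x, x ^ n ∂P - ∫ x, x ^ n ∂N = s) ∧
    (∀ k < n, ∫ x, ‖x ^ k‖ ∂P ≤ ε) ∧ (∀ k < n, ∫ x, ‖x ^ k‖ ∂N ≤ ε) := by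
  set B : ℝ := ∑ j ∈ Finset.range (n + 1), (n.choose j : ℝ) * ((j : ℝ) + 1) ^ n with hB
  have hB0 : 0 ≤ B := by positivity
  set R : ℝ := 1 + |s| * B / ε with hR
  have hR1 : 1 ≤ R := by
    have : 0 ≤ |s| * B / ε := by positivity
    linarith
  have hR0 : 0 < R := by linarith
  have hRB : |s| * B ≤ ε * R := by
    rw [hR, mul_add, mul_div_cancel₀ _ hε.ne']
    linarith
  set c : ℝ := s / (n.factorial * R ^ n) with hc
  have hf1 : (1 : ℝ) ≤ n.factorial := by exact_mod_cast n.factorial_pos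
  have hc1 : |c| * R ^ n ≤ |s| := by
    rw [hc, abs_div, abs_of_pos (by positivity : (0 : ℝ) < n.factorial * R ^ n),
      div_mul_eq_mul_div, div_le_iff₀ (by positivity)]
    have : 0 ≤ |s| * R ^ n := by positivity
    nlinarith
  set w : ℕ → ℝ := fun j => c * ((-1 : ℝ) ^ (n - j) * n.choose j) with hw
  set x : ℕ → ℝ := fun j => j * R with hx
  have hwabs : ∀ j, |w j| = |c| * n.choose j := fun j => by
    simp [hw, abs_mul]
  have hmom : ∀ k ≤ n, ∑ j ∈ Finset.range (n + 1), w j * x j ^ k =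
      if k = n then s else 0 := by
    intro k hk
    have : ∑ j ∈ Finset.range (n + 1), w j * x j ^ k = c * R ^ k *
        ∑ j ∈ Finset.range (n + 1), ((-1 : ℝ) ^ (n - j) * n.choose j) * (j : ℝ) ^ k := by
      rw [Finset.mul_sum]
      refine Finset.sum_congr rfl fun j _ => ?_
      simp only [hw, hx]
      ring
    rw [this, diff_sum n k hk]
    split_ifs with h
    · subst h
      rw [hc]
      field_simp
    · simp
  have hbound : ∀ k < n, ∀ v : ℕ → ℝ, (∀ j, v j ≤ |w j|) →
      ∑ j ∈ Finset.range (n + 1), v j * ‖x j ^ k‖ ≤ ε := by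
    intro k hk v hv
    have h1 : ∑ j ∈ Finset.range (n + 1), v j * ‖x j ^ k‖ ≤ |c| * R ^ (n - 1) * B := by
      rw [hB, Finset.mul_sum]
      refine Finset.sum_le_sum fun j _ => ?_
      have e : ‖x j ^ k‖ = (j : ℝ) ^ k * R ^ k := by
        rw [Real.norm_eq_abs, abs_of_nonneg (by simp only [hx]; positivity)]
        simp only [hx]
        ring
      have e1 : (j : ℝ) ^ k ≤ ((j : ℝ) + 1) ^ n :=
        (pow_le_pow_left₀ (by positivity) (by linarith) k).trans
          (pow_le_pow_right₀ (by linarith [(Nat.cast_nonneg j : (0 : ℝ) ≤ j)]) hk.le)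
      have e2 : R ^ k ≤ R ^ (n - 1) := pow_le_pow_right₀ hR1 (by omega)
      calc v j * ‖x j ^ k‖ ≤ |w j| * ‖x j ^ k‖ := by gcongr; exact hv j
        _ = |c| * n.choose j * ((j : ℝ) ^ k * R ^ k) := by rw [hwabs, e]
        _ ≤ |c| * n.choose j * (((j : ℝ) + 1) ^ n * R ^ (n - 1)) := by gcongr
        _ = _ := by ring
    have h2 : R ^ n = R ^ (n - 1) * R := by
      rw [← pow_succ]; congr 1; omega
    refine h1.trans (le_of_mul_le_mul_right ?_ hR0)
    calc |c| * R ^ (n - 1) * B * R = |c| * R ^ n * B := by rw [h2]; ring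
      _ ≤ |s| * B := by gcongr
      _ ≤ ε * R := hRB
  have hsub : ∀ k, ∑ j ∈ Finset.range (n + 1), max (w j) 0 * x j ^ k -
      ∑ j ∈ Finset.range (n + 1), max (-w j) 0 * x j ^ k =
      ∑ j ∈ Finset.range (n + 1), w j * x j ^ k := fun k => by
    rw [← Finset.sum_sub_distrib]
    refine Finset.sum_congr rfl fun j _ => ?_
    rw [← sub_mul]
    congr 1
    rcases le_total (w j) 0 with h | h
    · rw [max_eq_right h, max_eq_left (by linarith)]; ring
    · rw [max_eq_left h, max_eq_right (by linarith)]; ring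
  refine ⟨∑ j ∈ Finset.range (n + 1), ENNReal.ofReal (w j) • Measure.dirac (x j),
    ∑ j ∈ Finset.range (n + 1), ENNReal.ofReal (-w j) • Measure.dirac (x j),
    fun k => (integral_atoms _ _ _ _).1,
    fun k => (integral_atoms (n + 1) (fun j => -w j) x _).1, ?_, ?_, ?_, ?_⟩
  · intro k hk
    rw [(integral_atoms _ _ _ _).2, (integral_atoms (n + 1) (fun j => -w j) x _).2, hsub,
      hmom k hk.le, if_neg hk.ne]
  · rw [(integral_atoms _ _ _ _).2, (integral_atoms (n + 1) (fun j => -w j) x _).2, hsub,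
      hmom n le_rfl, if_pos rfl]
  · intro k hk
    rw [(integral_atoms _ _ _ _).2]
    exact hbound k hk _ fun j => max_le (le_abs_self _) (abs_nonneg _)
  · intro k hk
    rw [(integral_atoms (n + 1) (fun j => -w j) x _).2]
    exact hbound k hk _ fun j => max_le (neg_le_abs _) (abs_nonneg _)

lemma exists_rec (t : ℕ → ℝ) (F : ℕ → ℝ → ℕ → ℝ) :
    ∃ s : ℕ → ℝ, ∀ n, s n = t n - ∑ m ∈ Finset.range n, F m (s m) n := by
  let s : ℕ → ℝ := fun n => Nat.strongRec
    (fun n (ih : ∀ m, m < n → ℝ) => t n - ∑ m : Fin n, F m (ih m m.2) n) n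
  refine ⟨s, fun n => ?_⟩
  have : s n = t n - ∑ m : Fin n, F m (s m) n := by
    simp only [s]
    rw [Nat.strongRec_eq]
  rw [this, Finset.sum_range (fun m => F m (s m) n)]

lemma integrable_sum_aux (P : ℕ → Measure ℝ) (k : ℕ)
    (hP : ∀ n, Integrable (fun x : ℝ => x ^ k) (P n))
    (hb : ∀ n, k < n → ∫ x, ‖x ^ k‖ ∂P n ≤ (1 / 2 : ℝ) ^ n) :
    Integrable (fun x : ℝ => x ^ k) (Measure.sum P) := by
  refine integrable_sum_measure hP ?_
  refine Summable.of_norm_bounded_eventually_nat summable_geometric_two ?_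
  filter_upwards [Filter.eventually_gt_atTop k] with n hn
  rw [Real.norm_of_nonneg (integral_nonneg fun _ => norm_nonneg _)]
  exact hb n hn

/-- **Boas; cf. Widder.** Every real sequence is the moment sequence of a
signed Borel measure of bounded variation on `ℝ` all of whose absolute moments are finite:
there is a signed measure `μ` (with Jordan decomposition `μ₁ − μ₂`) such that
`∫ |x|^k d|μ| < ∞` and `∫ x^k dμ₁ − ∫ x^k dμ₂ = t k` for all `k`. -/
theorem every_sequence_is_signed_moment_sequence (t : ℕ → ℝ) :
    ∃ μ : SignedMeasure ℝ,
      (∀ k : ℕ, Integrable (fun x : ℝ => |x| ^ k) μ.totalVariation) ∧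
      (∀ k : ℕ,
        (∫ x, x ^ k ∂μ.toJordanDecomposition.posPart) -
          (∫ x, x ^ k ∂μ.toJordanDecomposition.negPart) = t k) := by
  choose P N hP hN h0 h1 hbP hbN using fun (n : ℕ) (s : ℝ) =>
    step n s ((1 / 2 : ℝ) ^ n) (by positivity)
  obtain ⟨s, hs⟩ := exists_rec t (fun m r k => ∫ x, x ^ k ∂P m r - ∫ x, x ^ k ∂N m r)
  have iP : ∀ k : ℕ, Integrable (fun x : ℝ => x ^ k) (Measure.sum fun n => P n (s n)) :=
    fun k => integrable_sum_aux _ k (fun n => hP n _ k) fun n hn => hbP n _ k hn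
  have iN : ∀ k : ℕ, Integrable (fun x : ℝ => x ^ k) (Measure.sum fun n => N n (s n)) :=
    fun k => integrable_sum_aux _ k (fun n => hN n _ k) fun n hn => hbN n _ k hn
  refine main_aux t _ _ iP iN fun k => ?_
  have hsum := (hasSum_integral_measure (iP k)).sub (hasSum_integral_measure (iN k))
  refine hsum.unique ?_
  have := hasSum_sum_of_ne_finset_zero (L := SummationFilter.unconditional ℕ) (s := Finset.range (k + 1))
    (f := fun n => ∫ x, x ^ k ∂P n (s n) - ∫ x, x ^ k ∂N n (s n))
    (fun n hn => h0 n _ k (by simpa using hn))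
  rw [Finset.sum_range_succ, h1, hs k] at this
  simpa using this
end
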